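/- arXiv:2502.02820 — 3 statements merged into one kernel-verified Lean document; each statement's English description precedes it below -/
import Mathlib

section
/- Let X be an integrable random vector in ℝ^d and Z a random variable taking values in the one-hot label set {z_1,…,z_k} ⊂ {0,1}^k, each with positive probability. Let L : ℝ^k × {z_1,…,z_k} → [0,∞) be a loss function that is convex in its first argument. Suppose that for every class z with P(Z = z) > 0 and every order n ∈ {1,…,N}, the class-conditional moment tensor E[X_{i₁}⋯X_{iₙ} | Z = z] equals the unconditional moment tensor E[X_{i₁}⋯X_{iₙ}] (for all index tuples i₁,…,iₙ). Then for every degree-N polynomial predictor η, the expected loss E[L(η(X), Z)] is at least the trivially attainable loss, i.e. at least inf over constant vectors c ∈ ℝ^k of E[L(c, Z)]. -/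
open MeasureTheory ProbabilityTheory

/-- A degree-`N` polynomial predictor `x ↦ b + ∑_{n=1}^N A⁽ⁿ⁾[x,…,x]`, where the order-`n`
coefficient tensor `A n : (Fin (n+1) → Fin d) → Fin k → ℝ` (for `n : Fin N`, giving degrees
`1,…,N`) is contracted against `n+1` copies of `x`. -/
noncomputable def polyPred {d k : ℕ} (N : ℕ) (b : Fin k → ℝ)
    (A : (n : Fin N) → ((Fin (n.1 + 1) → Fin d) → Fin k → ℝ)) :
    (Fin d → ℝ) → (Fin k → ℝ) :=
  fun x j => b j + ∑ n : Fin N, ∑ idx : Fin (n.1 + 1) → Fin d, A n idx j * ∏ t, x (idx t)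

theorem polyPred_integrable {Ω : Type*} [MeasurableSpace Ω] {ν : Measure Ω} [IsFiniteMeasure ν]
    {d k N : ℕ} {X : Ω → Fin d → ℝ}
    (hmom : ∀ (n : Fin N) (idx : Fin (n.1 + 1) → Fin d),
      Integrable (fun ω => ∏ t, X ω (idx t)) ν)
    (b : Fin k → ℝ) (A : (n : Fin N) → ((Fin (n.1 + 1) → Fin d) → Fin k → ℝ)) :
    Integrable (fun ω => polyPred N b A (X ω)) ν :=
  Integrable.of_eval fun _ => (integrable_const _).add <|
    integrable_finsetSum _ fun n _ => integrable_finsetSum _ fun idx _ =>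
      (hmom n idx).const_mul _

/-- The mean of a polynomial predictor depends only on the moments of its argument. -/
theorem integral_polyPred {Ω : Type*} [MeasurableSpace Ω] {ν : Measure Ω} [IsProbabilityMeasure ν]
    {d k N : ℕ} {X : Ω → Fin d → ℝ}
    (hmom : ∀ (n : Fin N) (idx : Fin (n.1 + 1) → Fin d),
      Integrable (fun ω => ∏ t, X ω (idx t)) ν)
    (b : Fin k → ℝ) (A : (n : Fin N) → ((Fin (n.1 + 1) → Fin d) → Fin k → ℝ)) :
    ∫ ω, polyPred N b A (X ω) ∂ν = fun j => b j + ∑ n : Fin N,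
      ∑ idx : Fin (n.1 + 1) → Fin d, A n idx j * ∫ ω, ∏ t, X ω (idx t) ∂ν := by
  ext j
  have hterm (n : Fin N) (idx : Fin (n.1 + 1) → Fin d) :
      Integrable (fun ω => A n idx j * ∏ t, X ω (idx t)) ν := (hmom n idx).const_mul _
  rw [eval_integral fun i => (polyPred_integrable hmom b A).eval i]
  simp only [polyPred]
  rw [integral_add (integrable_const _) (integrable_finsetSum _ fun n _ =>
      integrable_finsetSum _ fun idx _ => hterm n idx),
    integral_finsetSum _ fun n _ => integrable_finsetSum _ fun idx _ => hterm n idx]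
  simp only [integral_const, probReal_univ, one_smul]
  congr 1
  refine Finset.sum_congr rfl fun n _ => ?_
  rw [integral_finsetSum _ fun idx _ => hterm n idx]
  simp only [integral_const_mul]

/-- To compare two expectations it suffices to compare them conditionally on each value of a
random variable with finitely many values. -/
theorem integral_le_integral_of_cond_le {Ω ι : Type*} [MeasurableSpace Ω] {μ : Measure Ω}
    [IsFiniteMeasure μ] [Fintype ι] [MeasurableSpace ι] [MeasurableSingletonClass ι]
    {Z : Ω → ι} (hZ : Measurable Z) (hZpos : ∀ j, 0 < μ (Z ⁻¹' {j})) {f g : Ω → ℝ}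
    (hf : Integrable f μ) (hg : Integrable g μ)
    (hfg : ∀ j, ∫ ω, f ω ∂(μ[|Z ⁻¹' {j}]) ≤ ∫ ω, g ω ∂(μ[|Z ⁻¹' {j}])) :
    ∫ ω, f ω ∂μ ≤ ∫ ω, g ω ∂μ := by
  have hms (j : ι) : MeasurableSet (Z ⁻¹' {j}) := hZ (measurableSet_singleton j)
  have hdisj : Pairwise (Function.onFun Disjoint fun j => Z ⁻¹' {j}) :=
    pairwise_disjoint_fiber Z
  have hsplit {h : Ω → ℝ} (hh : Integrable h μ) :
      ∫ ω, h ω ∂μ = ∑ j, ∫ ω in Z ⁻¹' {j}, h ω ∂μ := by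
    rw [← integral_iUnion_fintype hms hdisj fun j => hh.integrableOn,
      ← Set.preimage_iUnion, Set.iUnion_of_singleton, Set.preimage_univ, setIntegral_univ]
  rw [hsplit hf, hsplit hg]
  refine Finset.sum_le_sum fun j _ => ?_
  have h := hfg j
  simp only [ProbabilityTheory.cond, integral_smul_measure, smul_eq_mul] at h
  exact le_of_mul_le_mul_left h
    (ENNReal.toReal_pos (ENNReal.inv_ne_zero.2 (measure_ne_top _ _))
      (ENNReal.inv_ne_top.2 (pos_iff_ne_zero.1 (hZpos j))))

/-- **Sufficiency of moment matching.** If all class-conditional moment tensors of `X` up to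
order `N` agree with the unconditional ones, then no degree-`N` polynomial predictor can beat
the trivially attainable loss for a loss function convex in its first argument. -/
theorem sufficiency_of_moment_matching
    {Ω : Type*} [MeasurableSpace Ω] (μ : Measure Ω) [IsProbabilityMeasure μ]
    {d k N : ℕ}
    (X : Ω → Fin d → ℝ) (Z : Ω → Fin k)
    (hX : Measurable X) (hZ : Measurable Z)
    (hXint : ∀ i, Integrable (fun ω => X ω i) μ)
    (hZpos : ∀ j : Fin k, 0 < μ (Z ⁻¹' {j}))
    (L : (Fin k → ℝ) → Fin k → ℝ)
    (hL0 : ∀ v j, 0 ≤ L v j)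
    (hLconvex : ∀ j, ConvexOn ℝ Set.univ (fun v => L v j))
    (hmomInt : ∀ (n : Fin N) (idx : Fin (n.1 + 1) → Fin d),
      Integrable (fun ω => ∏ t, X ω (idx t)) μ)
    (hmomCondInt : ∀ (j : Fin k) (n : Fin N) (idx : Fin (n.1 + 1) → Fin d),
      Integrable (fun ω => ∏ t, X ω (idx t)) (μ[|Z ⁻¹' {j}]))
    (hmoments : ∀ (j : Fin k) (n : Fin N) (idx : Fin (n.1 + 1) → Fin d),
      ∫ ω, ∏ t, X ω (idx t) ∂(μ[|Z ⁻¹' {j}]) = ∫ ω, ∏ t, X ω (idx t) ∂μ)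
    (b : Fin k → ℝ) (A : (n : Fin N) → ((Fin (n.1 + 1) → Fin d) → Fin k → ℝ))
    (hint : Integrable (fun ω => L (polyPred N b A (X ω)) (Z ω)) μ) :
    (⨅ c : Fin k → ℝ, ∫ ω, L c (Z ω) ∂μ) ≤ ∫ ω, L (polyPred N b A (X ω)) (Z ω) ∂μ := by
  have hms (j : Fin k) : MeasurableSet (Z ⁻¹' {j}) := hZ (measurableSet_singleton j)
  have hprob (j : Fin k) : IsProbabilityMeasure (μ[|Z ⁻¹' {j}]) :=
    cond_isProbabilityMeasure (hZpos j).ne'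
  have hcont (j : Fin k) : Continuous fun v => L v j :=
    continuousOn_univ.1 ((hLconvex j).continuousOn isOpen_univ)
  have hbdd : BddBelow (Set.range fun c : Fin k → ℝ => ∫ ω, L c (Z ω) ∂μ) :=
    ⟨0, by rintro _ ⟨c, rfl⟩; exact integral_nonneg fun ω => hL0 _ _⟩
  set m := ∫ ω, polyPred N b A (X ω) ∂μ with hm
  have hmean (j : Fin k) : ∫ ω, polyPred N b A (X ω) ∂(μ[|Z ⁻¹' {j}]) = m := by
    rw [hm, integral_polyPred (hmomCondInt j), integral_polyPred hmomInt]
    simp only [hmoments]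
  have hconst : Integrable (fun ω => L m (Z ω)) μ :=
    Integrable.of_finite.comp_measurable hZ
  refine (ciInf_le hbdd m).trans (integral_le_integral_of_cond_le hZ hZpos hconst hint fun j => ?_)
  have hZj : ∀ᵐ ω ∂(μ[|Z ⁻¹' {j}]), Z ω = j := ae_cond_mem (hms j)
  have hintj : Integrable (fun ω => L (polyPred N b A (X ω)) j) (μ[|Z ⁻¹' {j}]) := by
    refine (hint.restrict.smul_measure (ENNReal.inv_ne_top.2 (hZpos j).ne')).congr ?_
    filter_upwards [hZj] with ω hω
    rw [hω]
  calc ∫ ω, L m (Z ω) ∂(μ[|Z ⁻¹' {j}]) = ∫ _, L m j ∂(μ[|Z ⁻¹' {j}]) :=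
        integral_congr_ae (by filter_upwards [hZj] with ω hω; rw [hω])
    _ = L (∫ ω, polyPred N b A (X ω) ∂(μ[|Z ⁻¹' {j}])) j := by
        rw [hmean j]
        simp
    _ ≤ ∫ ω, L (polyPred N b A (X ω)) j ∂(μ[|Z ⁻¹' {j}]) :=
        (hLconvex j).map_integral_le (hcont j).continuousOn isClosed_univ (by simp)
          (polyPred_integrable (hmomCondInt j) b A) hintj
    _ = ∫ ω, L (polyPred N b A (X ω)) (Z ω) ∂(μ[|Z ⁻¹' {j}]) :=
        integral_congr_ae (by filter_upwards [hZj] with ω hω; rw [hω])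
end

section
/- Let X be a square-integrable random vector in ℝ^d and Z a random variable taking values in the one-hot label set {z_1,…,z_k}, each with positive probability. Let L : ℝ^k × {z_1,…,z_k} → [0,∞) be convex in its first argument. Suppose every class-conditional mean equals the unconditional mean, E[X | Z = z] = E[X], and every class-conditional second moment matrix equals the unconditional one, E[X Xᵀ | Z = z] = E[X Xᵀ], for all classes z. Then no quadratic predictor η(x) = A[x,x] + Bx + c (with A an ℝ^k-valued symmetric bilinear form on ℝ^d, B ∈ ℝ^{k×d}, c ∈ ℝ^k) achieves expected loss E[L(η(X), Z)] strictly below the trivially attainable loss inf_{c ∈ ℝ^k} E[L(c, Z)]. -/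
open MeasureTheory ProbabilityTheory

/-- A quadratic predictor `η(x) = A[x,x] + Bx + c`, where `A` is an `ℝ^k`-valued
bilinear form on `ℝ^d` (given as a family of matrices), `B ∈ ℝ^{k×d}` and `c ∈ ℝ^k`. -/
noncomputable def quadPred {d k : ℕ} (A : Fin k → Matrix (Fin d) (Fin d) ℝ)
    (B : Matrix (Fin k) (Fin d) ℝ) (c : Fin k → ℝ) : (Fin d → ℝ) → (Fin k → ℝ) :=
  fun x j => (∑ i, ∑ i', A j i i' * x i * x i') + B.mulVec x j + c j

/-- The law of total expectation along a finite-valued random variable. -/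
lemma integral_eq_sum_cond_fiber {Ω ι : Type*} [MeasurableSpace Ω] {μ : Measure Ω}
    [IsFiniteMeasure μ] [Fintype ι] [MeasurableSpace ι] [DiscreteMeasurableSpace ι]
    {Z : Ω → ι} (hZ : Measurable Z) {f : Ω → ℝ} (hf : Integrable f μ) :
    ∫ ω, f ω ∂μ = ∑ j, μ.real (Z ⁻¹' {j}) * ∫ ω, f ω ∂(μ[|Z ⁻¹' {j}]) := by
  have hsum := sum_meas_smul_cond_fiber hZ μ
  have hf' : ∀ j ∈ Finset.univ, Integrable f (μ (Z ⁻¹' {j}) • μ[|Z ⁻¹' {j}]) :=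
    integrable_finsetSum_measure.1 (hsum.symm ▸ hf)
  conv_lhs => rw [← hsum]
  rw [integral_finsetSum_measure hf']
  simp [integral_smul_measure, Measure.real]

/-- Integrability passes to a conditional measure. -/
lemma MeasureTheory.Integrable.cond {Ω E : Type*} [MeasurableSpace Ω] [NormedAddCommGroup E]
    {μ : Measure Ω} {f : Ω → E} (hf : Integrable f μ) {s : Set Ω} (hs : μ s ≠ 0) :
    Integrable f (μ[|s]) :=
  hf.restrict.smul_measure (ENNReal.inv_ne_top.2 hs)

/-- Each component of a quadratic predictor is integrable when the moments of order one and two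
are. -/
lemma integrable_quadPred {Ω : Type*} [MeasurableSpace Ω] {ν : Measure Ω} [IsFiniteMeasure ν]
    {d k : ℕ} {X : Ω → Fin d → ℝ} (hX : ∀ i, Integrable (fun ω => X ω i) ν)
    (hXX : ∀ i i', Integrable (fun ω => X ω i * X ω i') ν)
    (A : Fin k → Matrix (Fin d) (Fin d) ℝ) (B : Matrix (Fin k) (Fin d) ℝ) (c : Fin k → ℝ)
    (j : Fin k) : Integrable (fun ω => quadPred A B c (X ω) j) ν := by
  simp only [quadPred, Matrix.mulVec, dotProduct, mul_assoc]
  exact ((integrable_finsetSum _ fun i _ => integrable_finsetSum _ fun i' _ =>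
    (hXX i i').const_mul _).add (integrable_finsetSum _ fun i _ => (hX i).const_mul _)).add
    (integrable_const _)

/-- The mean of a quadratic predictor depends only on the first two moments. -/
lemma integral_quadPred {Ω : Type*} [MeasurableSpace Ω] {ν : Measure Ω} [IsProbabilityMeasure ν]
    {d k : ℕ} {X : Ω → Fin d → ℝ} (hX : ∀ i, Integrable (fun ω => X ω i) ν)
    (hXX : ∀ i i', Integrable (fun ω => X ω i * X ω i') ν)
    (A : Fin k → Matrix (Fin d) (Fin d) ℝ) (B : Matrix (Fin k) (Fin d) ℝ) (c : Fin k → ℝ)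
    (j : Fin k) :
    ∫ ω, quadPred A B c (X ω) j ∂ν =
      (∑ i, ∑ i', A j i i' * ∫ ω, X ω i * X ω i' ∂ν) + (∑ i, B j i * ∫ ω, X ω i ∂ν) + c j := by
  have hquad : ∀ i i', Integrable (fun ω => A j i i' * (X ω i * X ω i')) ν :=
    fun i i' => (hXX i i').const_mul _
  have hlin : ∀ i, Integrable (fun ω => B j i * X ω i) ν := fun i => (hX i).const_mul _
  have hquadsum : ∀ i, Integrable (fun ω => ∑ i', A j i i' * (X ω i * X ω i')) ν :=
    fun i => integrable_finsetSum _ fun i' _ => hquad i i'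
  have hsum : Integrable (fun ω => ∑ i, ∑ i', A j i i' * (X ω i * X ω i')) ν :=
    integrable_finsetSum _ fun i _ => hquadsum i
  have hlinsum : Integrable (fun ω => ∑ i, B j i * X ω i) ν :=
    integrable_finsetSum _ fun i _ => hlin i
  have hboth : Integrable (fun ω => (∑ i, ∑ i', A j i i' * (X ω i * X ω i')) +
      ∑ i, B j i * X ω i) ν := hsum.add hlinsum
  simp only [quadPred, Matrix.mulVec, dotProduct, mul_assoc]
  rw [integral_add hboth (integrable_const _), integral_add hsum hlinsum,
    integral_finsetSum _ fun i _ => hquadsum i, integral_finsetSum _ fun i _ => hlin i]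
  simp only [integral_finsetSum _ fun i' _ => hquad _ i', integral_const_mul, integral_const,
    probReal_univ, one_smul]

/-- **Quadratic sufficiency.** If every class-conditional mean and second moment matrix of `X`
equals the corresponding unconditional moment, then no quadratic predictor achieves expected
loss strictly below the trivially attainable loss, for a loss convex in its first argument. -/
theorem quadratic_sufficiency
    {Ω : Type*} [MeasurableSpace Ω] (μ : Measure Ω) [IsProbabilityMeasure μ]
    {d k : ℕ}
    (X : Ω → Fin d → ℝ) (Z : Ω → Fin k)
    (hX : Measurable X) (hZ : Measurable Z)
    (hX2 : Integrable (fun ω => ∑ i, (X ω i) ^ 2) μ)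
    (hXint : ∀ i, Integrable (fun ω => X ω i) μ)
    (hXXint : ∀ i i', Integrable (fun ω => X ω i * X ω i') μ)
    (hZpos : ∀ j : Fin k, 0 < μ (Z ⁻¹' {j}))
    (L : (Fin k → ℝ) → Fin k → ℝ)
    (hL0 : ∀ v j, 0 ≤ L v j)
    (hLconvex : ∀ j, ConvexOn ℝ Set.univ (fun v => L v j))
    (hmean : ∀ (j : Fin k) (i : Fin d),
      ∫ ω, X ω i ∂(μ[|Z ⁻¹' {j}]) = ∫ ω, X ω i ∂μ)
    (hsecond : ∀ (j : Fin k) (i i' : Fin d),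
      ∫ ω, X ω i * X ω i' ∂(μ[|Z ⁻¹' {j}]) = ∫ ω, X ω i * X ω i' ∂μ)
    (A : Fin k → Matrix (Fin d) (Fin d) ℝ) (hAsymm : ∀ j, (A j).IsSymm)
    (B : Matrix (Fin k) (Fin d) ℝ) (c : Fin k → ℝ)
    (hint : Integrable (fun ω => L (quadPred A B c (X ω)) (Z ω)) μ) :
    ¬ (∫ ω, L (quadPred A B c (X ω)) (Z ω) ∂μ < ⨅ c' : Fin k → ℝ, ∫ ω, L c' (Z ω) ∂μ) := by
  set q : Fin k → ℝ := fun j => ∫ ω, quadPred A B c (X ω) j ∂μ with hq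
  have hjensen : ∀ j, L q j ≤ ∫ ω, L (quadPred A B c (X ω)) (Z ω) ∂(μ[|Z ⁻¹' {j}]) := by
    intro j
    have hne : μ (Z ⁻¹' {j}) ≠ 0 := (hZpos j).ne'
    have : IsProbabilityMeasure (μ[|Z ⁻¹' {j}]) := cond_isProbabilityMeasure hne
    have hX1 := fun i => (hXint i).cond hne
    have hXX1 := fun i i' => (hXXint i i').cond hne
    have hη : Integrable (fun ω => quadPred A B c (X ω)) (μ[|Z ⁻¹' {j}]) :=
      Integrable.of_eval fun l => integrable_quadPred hX1 hXX1 A B c l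
    have hqj : q = ∫ ω, quadPred A B c (X ω) ∂(μ[|Z ⁻¹' {j}]) := by
      ext l
      rw [eval_integral fun l => integrable_quadPred hX1 hXX1 A B c l,
        integral_quadPred hX1 hXX1, hq]
      simp only [integral_quadPred hXint hXXint, hmean, hsecond]
    have hae : (fun ω => L (quadPred A B c (X ω)) (Z ω)) =ᵐ[μ[|Z ⁻¹' {j}]]
        fun ω => L (quadPred A B c (X ω)) j := by
      filter_upwards [ae_cond_mem (hZ (measurableSet_singleton j))] with ω hω
      rw [show Z ω = j from hω]
    rw [hqj, integral_congr_ae hae]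
    exact (hLconvex j).map_integral_le ((hLconvex j).continuousOn isOpen_univ) isClosed_univ
      (Filter.Eventually.of_forall fun _ => Set.mem_univ _) hη ((hint.cond hne).congr hae)
  have hconst : Integrable (fun ω => L q (Z ω)) μ :=
    Integrable.of_finite.comp_measurable hZ
  rw [not_lt]
  refine (ciInf_le ⟨0, ?_⟩ q).trans ?_
  · rintro _ ⟨v, rfl⟩
    exact integral_nonneg fun ω => hL0 v _
  rw [integral_eq_sum_cond_fiber hZ hconst, integral_eq_sum_cond_fiber hZ hint]
  refine Finset.sum_le_sum fun j _ => mul_le_mul_of_nonneg_left ?_ measureReal_nonneg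
  have : IsProbabilityMeasure (μ[|Z ⁻¹' {j}]) := cond_isProbabilityMeasure (hZpos j).ne'
  have hae : (fun ω => L q (Z ω)) =ᵐ[μ[|Z ⁻¹' {j}]] fun _ => L q j := by
    filter_upwards [ae_cond_mem (hZ (measurableSet_singleton j))] with ω hω
    rw [show Z ω = j from hω]
  rw [integral_congr_ae hae]
  simpa using hjensen j
end

section
/- Let X be an integrable random vector in ℝ^d and Z a random variable taking values in the one-hot label set {z_1,…,z_k}. Let L : ℝ^k × {z_1,…,z_k} → [0,∞) be differentiable in its first argument with bounded partial derivatives, such that for every index i and any two categories z₁, z₂ ≠ i, the off-category partial derivatives agree and never vanish: ∂L(η, z₁)/∂η_i = ∂L(η, z₂)/∂η_i ≠ 0 for all η. Suppose that the expected loss E[L(η(X), Z)] over degree-N polynomial predictors η(x) = b + Σ_{n=1}^N A^{(n)}[x,…,x] is minimized by a constant predictor (one with all coefficient tensors A^{(n)} = 0). Then for every order n ∈ {1,…,N} and every class z with P(Z = z) > 0, the class-conditional moment tensor E[X_{i₁}⋯X_{iₙ} | Z = z] equals the unconditional moment tensor E[X_{i₁}⋯X_{iₙ}] (for all index tuples i₁,…,iₙ).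 -/
open MeasureTheory ProbabilityTheory

/-- If the two-valued weight `c + e * 1_S` with `c ≠ 0` integrates to zero, both alone and against
`f`, then conditioning on `S` does not change the integral of `f`. -/
theorem integral_cond_eq_of_weight_orthogonal {Ω : Type*} [MeasurableSpace Ω] {μ : Measure Ω}
    [IsProbabilityMeasure μ] {S : Set Ω} (hS : MeasurableSet S) (hpos : 0 < μ S)
    {f : Ω → ℝ} (hf : Integrable f μ) {c e : ℝ} (hc : c ≠ 0)
    (hone : ∫ ω, (c + S.indicator (fun _ => e) ω) ∂μ = 0)
    (hmul : ∫ ω, (c + S.indicator (fun _ => e) ω) * f ω ∂μ = 0) :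
    ∫ ω, f ω ∂(μ[|S]) = ∫ ω, f ω ∂μ := by
  have hp : μ.real S ≠ 0 := (ENNReal.toReal_pos hpos.ne' (measure_ne_top μ S)).ne'
  have hone' : c + μ.real S * e = 0 := by
    rw [integral_add (integrable_const _) ((integrable_const _).indicator hS),
      integral_indicator_const _ hS] at hone
    simpa using hone
  have hmul' : c * ∫ ω, f ω ∂μ + e * ∫ ω in S, f ω ∂μ = 0 := by
    have hsplit : (fun ω => (c + S.indicator (fun _ => e) ω) * f ω) =
        fun ω => c * f ω + S.indicator (fun ω => e * f ω) ω := by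
      funext ω
      by_cases h : ω ∈ S <;> simp [h, add_mul]
    rw [hsplit, integral_add (hf.const_mul c) ((hf.const_mul e).indicator hS),
      integral_indicator hS, integral_const_mul, integral_const_mul] at hmul
    exact hmul
  have he : e ≠ 0 := by
    rintro rfl
    exact hc (by simpa using hone')
  have hset : ∫ ω in S, f ω ∂μ = μ.real S * ∫ ω, f ω ∂μ := by
    apply mul_left_cancel₀ he
    linear_combination hmul' - (∫ ω, f ω ∂μ) * hone'
  rw [ProbabilityTheory.cond, integral_smul_measure, hset, ENNReal.toReal_inv, smul_eq_mul]
  exact inv_mul_cancel_left₀ hp _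

/-- **Necessity of moment matching.** Suppose the loss `L` is differentiable in its first
argument with bounded partial derivatives, and its off-category partial derivatives never
vanish and do not depend on the category. If the expected loss over degree-`N` polynomial
predictors is minimized by the constant predictor `b` (all coefficient tensors zero) — with
the corresponding first-order optimality conditions holding — then all class-conditional
moment tensors of `X` up to order `N` equal the unconditional ones. -/
theorem necessity_of_moment_matching
    {Ω : Type*} [MeasurableSpace Ω] (μ : Measure Ω) [IsProbabilityMeasure μ]
    {d k N : ℕ}
    (X : Ω → Fin d → ℝ) (Z : Ω → Fin k)
    (hX : Measurable X) (hZ : Measurable Z)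
    (hmomInt : ∀ (n : Fin N) (idx : Fin (n.1 + 1) → Fin d),
      Integrable (fun ω => ∏ t, X ω (idx t)) μ)
    (hmomCondInt : ∀ (j : Fin k) (n : Fin N) (idx : Fin (n.1 + 1) → Fin d),
      Integrable (fun ω => ∏ t, X ω (idx t)) (μ[|Z ⁻¹' {j}]))
    (L : (Fin k → ℝ) → Fin k → ℝ)
    (hLdiff : ∀ z, Differentiable ℝ (fun v => L v z))
    (hLbdd : ∃ Cb : ℝ, ∀ (v : Fin k → ℝ) (z i : Fin k),
      |fderiv ℝ (fun w => L w z) v (Pi.single i 1)| ≤ Cb)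
    (hoffEq : ∀ (i z₁ z₂ : Fin k), z₁ ≠ i → z₂ ≠ i → ∀ v : Fin k → ℝ,
      fderiv ℝ (fun w => L w z₁) v (Pi.single i 1) =
      fderiv ℝ (fun w => L w z₂) v (Pi.single i 1))
    (hoffNe : ∀ (i z : Fin k), z ≠ i → ∀ v : Fin k → ℝ,
      fderiv ℝ (fun w => L w z) v (Pi.single i 1) ≠ 0)
    -- the constant predictor `b` minimizes the expected loss among degree-N polynomial
    -- predictors
    (b : Fin k → ℝ)
    (hmin : ∀ (b' : Fin k → ℝ) (A' : (n : Fin N) → ((Fin (n.1 + 1) → Fin d) → Fin k → ℝ)),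
      Integrable (fun ω => L (polyPred N b' A' (X ω)) (Z ω)) μ →
      ∫ ω, L b (Z ω) ∂μ ≤ ∫ ω, L (polyPred N b' A' (X ω)) (Z ω) ∂μ)
    -- first-order optimality conditions at the minimizing constant predictor
    (hfocBias : ∀ j : Fin k,
      ∫ ω, fderiv ℝ (fun w => L w (Z ω)) b (Pi.single j 1) ∂μ = 0)
    (hfocCoeff : ∀ (j : Fin k) (n : Fin N) (idx : Fin (n.1 + 1) → Fin d),
      ∫ ω, fderiv ℝ (fun w => L w (Z ω)) b (Pi.single j 1) * ∏ t, X ω (idx t) ∂μ = 0) :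
    ∀ (j : Fin k), 0 < μ (Z ⁻¹' {j}) →
      ∀ (n : Fin N) (idx : Fin (n.1 + 1) → Fin d),
        ∫ ω, ∏ t, X ω (idx t) ∂(μ[|Z ⁻¹' {j}]) = ∫ ω, ∏ t, X ω (idx t) ∂μ := by
  intro j hj n idx
  by_cases hz : ∃ z, z ≠ j
  · obtain ⟨z, hz⟩ := hz
    have hweight : ∀ ω, fderiv ℝ (fun w => L w (Z ω)) b (Pi.single j 1) =
        fderiv ℝ (fun w => L w z) b (Pi.single j 1) + (Z ⁻¹' {j}).indicator
          (fun _ => fderiv ℝ (fun w => L w j) b (Pi.single j 1) -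
            fderiv ℝ (fun w => L w z) b (Pi.single j 1)) ω := by
      intro ω
      by_cases h : Z ω = j
      · rw [Set.indicator_of_mem (show ω ∈ Z ⁻¹' {j} from h), h]
        ring
      · rw [Set.indicator_of_notMem (show ω ∉ Z ⁻¹' {j} from h), add_zero]
        exact hoffEq j (Z ω) z h hz b
    have hone := hfocBias j
    have hmul := hfocCoeff j n idx
    simp only [hweight] at hone hmul
    exact integral_cond_eq_of_weight_orthogonal (hZ (measurableSet_singleton j)) hj
      (hmomInt n idx) (hoffNe j z hz b) hone hmul
  · push Not at hz
    have huniv : Z ⁻¹' {j} = Set.univ := Set.eq_univ_of_forall fun ω => hz (Z ω)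
    rw [huniv, cond_univ]
end
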